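/- Let π, τ be permutations of [n] and let P_π, P_τ be their permutation matrices (P_σ e_i = e_{σ(i)}). Then (x,y) is a Nash equilibrium of the game (P_π, P_τ) if and only if there is a nonempty set J ⊆ [n] which is a union of orbits (cycles) of the permutation π⁻¹∘τ such that y = U_J and x = U_{π(J)}, where U_S is the uniform distribution on S. Consequently, C₁(P_π,P_τ) = C₂(P_π,P_τ) = the minimum size of an orbit of π⁻¹∘τ on [n]. -/

import Mathlib

/-!
Against a permutation matrix the payoff is `∑ j, x (σ j) * y j`, so `(x, y)` is an equilibrium exactly
when `x` is supported on `π (argmax y)` and `τ (supp y)` lies in `argmax x` (`isNash_iff`).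
Since the argmax of a mixed strategy lies in its support, this gives
`|supp x| ≤ |argmax y| ≤ |supp y| ≤ |argmax x| ≤ |supp x|`, so all the inclusions are equalities:
with `J = supp y = argmax y` the strategy `y` is uniform on `J`, the strategy `x` is uniform on
`π J`, and `π J = τ J`, which says that `J` is a union of orbits of `π⁻¹ * τ`. The converse is a
direct check of the best-response conditions.

A uniform distribution on `S` has complexity `|S|`, so `C₁` and `C₂` are both the least cardinality
of a nonempty union of orbits. Every such union contains an orbit, hence this is the least orbit size.
-/

noncomputable section

/-- `x` is a mixed strategy: nonnegative entries summing to 1. -/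
def IsMixed {n : ℕ} (x : Fin n → ℝ) : Prop :=
  (∀ i, 0 ≤ x i) ∧ (∑ i, x i = 1)

/-- Expected payoff `xᵀ M y`. -/
def payoff {n : ℕ} (M : Matrix (Fin n) (Fin n) ℤ) (x y : Fin n → ℝ) : ℝ :=
  ∑ i, ∑ j, x i * (M i j : ℝ) * y j

/-- `(x, y)` is a Nash equilibrium of the bimatrix game `(A, B)`. -/
def IsNash {n : ℕ} (A B : Matrix (Fin n) (Fin n) ℤ) (x y : Fin n → ℝ) : Prop :=
  IsMixed x ∧ IsMixed y ∧
    (∀ x', IsMixed x' → payoff A x' y ≤ payoff A x y) ∧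
    (∀ y', IsMixed y' → payoff B x y' ≤ payoff B x y)

/-- The real mixed strategy corresponding to a rational one. -/
def ratStrat {n : ℕ} (x : Fin n → ℚ) : Fin n → ℝ := fun i => (x i : ℝ)

/-- The complexity `C(x)` of a rational mixed strategy: writing
`x = (p₁/q, …, pₙ/q)` with `gcd(p₁, …, pₙ) = 1`, the value `q` is the lcm of the
denominators of the reduced fractions `x i`. -/
def Cx {n : ℕ} (x : Fin n → ℚ) : ℕ := Finset.univ.lcm fun i => (x i).den

/-- `C₁(A,B)`: minimum complexity of player 1's strategy over rational Nash equilibria. -/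
def C1 {n : ℕ} (A B : Matrix (Fin n) (Fin n) ℤ) : ℕ :=
  sInf {q | ∃ x y : Fin n → ℚ, IsNash A B (ratStrat x) (ratStrat y) ∧ Cx x = q}

/-- `C₂(A,B)`: minimum complexity of player 2's strategy over rational Nash equilibria. -/
def C2 {n : ℕ} (A B : Matrix (Fin n) (Fin n) ℤ) : ℕ :=
  sInf {q | ∃ x y : Fin n → ℚ, IsNash A B (ratStrat x) (ratStrat y) ∧ Cx y = q}

/-- The permutation matrix of `σ`: `P_σ e_i = e_{σ i}`. -/
def Pmat {n : ℕ} (σ : Equiv.Perm (Fin n)) : Matrix (Fin n) (Fin n) ℤ :=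
  Matrix.of fun i j => if σ j = i then 1 else 0

/-- The uniform distribution on a finite set `S ⊆ [n]`. -/
def unif {n : ℕ} (S : Finset (Fin n)) : Fin n → ℝ :=
  fun i => if i ∈ S then 1 / (S.card : ℝ) else 0

open Finset

/-! ### Best responses and equilibria of permutation games -/

lemma exists_pos_of_isMixed {n : ℕ} {x : Fin n → ℝ} (hx : IsMixed x) : ∃ i, 0 < x i := by
  by_contra! hc
  have := sum_nonpos (s := univ) (fun i _ => hc i)
  rw [hx.2] at this
  linarith

lemma isMixed_single {n : ℕ} (k : Fin n) : IsMixed (Pi.single k 1 : Fin n → ℝ) := by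
  refine ⟨fun i => ?_, by simp⟩
  by_cases h : i = k
  · subst h; simp
  · simp [h]

/-- A mixed strategy is a best response to the payoff vector `u` iff every pure strategy in its
support is one. -/
lemma bestResponse_iff {n : ℕ} {x : Fin n → ℝ} (hx : IsMixed x) (u : Fin n → ℝ) :
    (∀ x', IsMixed x' → ∑ i, x' i * u i ≤ ∑ i, x i * u i) ↔
      ∀ i, 0 < x i → ∀ k, u k ≤ u i := by
  constructor
  · intro h
    set v := ∑ i, x i * u i with hv
    have hu : ∀ k, u k ≤ v := fun k => by
      have := h _ (isMixed_single k)
      simpa [Pi.single_apply] using this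
    -- `∑ x i * (v - u i) = 0` has nonnegative terms, so each of them vanishes.
    have h0 : ∑ i, x i * (v - u i) = 0 := by
      simp only [mul_sub, sum_sub_distrib, ← sum_mul, hx.2]
      rw [← hv]; ring
    rw [sum_eq_zero_iff_of_nonneg
      (fun i _ => mul_nonneg (hx.1 i) (sub_nonneg.2 (hu i)))] at h0
    intro i hi k
    have h1 := h0 i (mem_univ i)
    have : v - u i = 0 := (mul_eq_zero.1 h1).resolve_left hi.ne'
    linarith [hu k]
  · intro h x' hx'
    obtain ⟨i, hi⟩ := exists_pos_of_isMixed hx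
    have e : ∑ k, x k * u k = u i := by
      have : ∀ k ∈ univ, x k * u k = x k * u i := fun k _ => by
        rcases (hx.1 k).eq_or_lt with hk | hk
        · simp [← hk]
        · rw [le_antisymm (h i hi k) (h k hk i)]
      rw [sum_congr rfl this, ← sum_mul, hx.2, one_mul]
    rw [e]
    calc ∑ k, x' k * u k ≤ ∑ k, x' k * u i :=
          sum_le_sum fun k _ => mul_le_mul_of_nonneg_left (h i hi k) (hx'.1 k)
      _ = u i := by rw [← sum_mul, hx'.2, one_mul]

lemma payoff_Pmat {n : ℕ} (σ : Equiv.Perm (Fin n)) (x y : Fin n → ℝ) :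
    payoff (Pmat σ) x y = ∑ j, y j * x (σ j) := by
  unfold payoff Pmat
  rw [sum_comm]
  refine sum_congr rfl fun j _ => ?_
  simp [mul_comm]

lemma payoff_Pmat' {n : ℕ} (σ : Equiv.Perm (Fin n)) (x y : Fin n → ℝ) :
    payoff (Pmat σ) x y = ∑ i, x i * y (σ⁻¹ i) := by
  rw [payoff_Pmat, ← Equiv.sum_comp σ (fun i => x i * y (σ⁻¹ i))]
  refine sum_congr rfl fun j _ => ?_
  simp [mul_comm]

/-- Equilibria of a permutation game: `supp x ⊆ π (argmax y)` and `τ (supp y) ⊆ argmax x`. -/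
lemma isNash_iff {n : ℕ} (π τ : Equiv.Perm (Fin n)) (x y : Fin n → ℝ) :
    IsNash (Pmat π) (Pmat τ) x y ↔ IsMixed x ∧ IsMixed y ∧
      (∀ i, 0 < x i → ∀ k, y k ≤ y (π⁻¹ i)) ∧ (∀ j, 0 < y j → ∀ k, x k ≤ x (τ j)) := by
  unfold IsNash
  refine and_congr_right fun hx => and_congr_right fun hy => and_congr ?_ ?_
  · simp only [payoff_Pmat']
    rw [bestResponse_iff hx (fun i => y (π⁻¹ i))]
    refine forall_congr' fun i => imp_congr_right fun _ => ?_
    exact ((π⁻¹).surjective.forall (p := fun k => y k ≤ y (π⁻¹ i))).symm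
  · simp only [payoff_Pmat]
    rw [bestResponse_iff hy (fun j => x (τ j))]
    refine forall_congr' fun i => imp_congr_right fun _ => ?_
    exact (τ.surjective.forall (p := fun k => x k ≤ x (τ i))).symm

/-! ### Uniform strategies and unions of orbits -/

lemma isMixed_unif {n : ℕ} {S : Finset (Fin n)} (hS : S.Nonempty) : IsMixed (unif S) := by
  have : (S.card : ℝ) ≠ 0 := by exact_mod_cast hS.card_pos.ne'
  refine ⟨fun i => ?_, ?_⟩
  · unfold unif; split_ifs <;> positivity
  · simp [unif, this]

lemma unif_le {n : ℕ} {S : Finset (Fin n)} {i : Fin n} (hi : i ∈ S) (k : Fin n) :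
    unif S k ≤ unif S i := by
  unfold unif
  rw [if_pos hi]
  split_ifs
  · exact le_rfl
  · positivity

lemma mem_of_unif_pos {n : ℕ} {S : Finset (Fin n)} {i : Fin n} (hi : 0 < unif S i) : i ∈ S := by
  by_contra h
  simp [unif, h] at hi

/-- A mixed strategy that attains its maximum at every point of its support `S` is uniform on `S`. -/
lemma eq_unif {n : ℕ} {x : Fin n → ℝ} (hx : IsMixed x) {S : Finset (Fin n)}
    (hS : ∀ i, i ∈ S ↔ 0 < x i) (hmax : ∀ i ∈ S, ∀ k, x k ≤ x i) : x = unif S := by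
  have h0 : ∀ i, i ∉ S → x i = 0 := fun i hi =>
    le_antisymm (not_lt.1 fun h => hi ((hS i).2 h)) (hx.1 i)
  funext i
  by_cases hi : i ∈ S
  · have h1 : ∑ k ∈ S, x k = 1 := by
      rw [← hx.2]
      exact sum_subset (subset_univ S) fun k _ hk => h0 k hk
    rw [sum_congr rfl fun k hk => le_antisymm (hmax i hi k) (hmax k hk i), sum_const,
      nsmul_eq_mul] at h1
    simp only [unif, if_pos hi]
    exact eq_one_div_of_mul_eq_one_right h1
  · simp [unif, hi, h0 i hi]

/-- On a finite type, a set mapped into itself by a permutation is a union of its orbits. -/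
lemma mem_of_sameCycle {n : ℕ} {f : Equiv.Perm (Fin n)} {J : Finset (Fin n)}
    (hJ : ∀ j ∈ J, f j ∈ J) {i j : Fin n} (hi : i ∈ J) (h : f.SameCycle i j) : j ∈ J := by
  obtain ⟨k, -, -, rfl⟩ := h.exists_pow_eq'
  clear h
  induction k with
  | zero => simpa using hi
  | succ k ih => rw [pow_succ', Equiv.Perm.mul_apply]; exact hJ _ ih

/-- Support and argmax sizes are squeezed together, which forces both strategies of an equilibrium to
be uniform. -/
lemma isNash_iff_unif {n : ℕ} (π τ : Equiv.Perm (Fin n)) (x y : Fin n → ℝ) :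
    IsNash (Pmat π) (Pmat τ) x y ↔
      ∃ J : Finset (Fin n), J.Nonempty ∧
        (∀ i ∈ J, ∀ j, (π⁻¹ * τ).SameCycle i j → j ∈ J) ∧
        y = unif J ∧ x = unif (J.image π) := by
  classical
  rw [isNash_iff]
  constructor
  · rintro ⟨hx, hy, h1, h2⟩
    obtain ⟨i₀, hi₀⟩ := exists_pos_of_isMixed hx
    obtain ⟨j₀, hj₀⟩ := exists_pos_of_isMixed hy
    set Sx := univ.filter (fun i => 0 < x i) with hSx
    set Sy := univ.filter (fun i => 0 < y i) with hSy
    set Ax := univ.filter (fun i => ∀ k, x k ≤ x i) with hAx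
    set Ay := univ.filter (fun i => ∀ k, y k ≤ y i) with hAy
    have e1 : Sx ⊆ Ay.image π := fun i hi => by
      simp only [hSx, mem_filter, mem_univ, true_and] at hi
      exact mem_image.2 ⟨π⁻¹ i, by simpa [hAy] using h1 i hi, by simp⟩
    have e2 : Ay ⊆ Sy := fun i hi => by
      simp only [hAy, hSy, mem_filter, mem_univ, true_and] at hi ⊢
      exact hj₀.trans_le (hi j₀)
    have e3 : Sy.image τ ⊆ Ax := fun i hi => by
      obtain ⟨j, hj, rfl⟩ := mem_image.1 hi
      simp only [hSy, mem_filter, mem_univ, true_and] at hj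
      simpa [hAx] using h2 j hj
    have e4 : Ax ⊆ Sx := fun i hi => by
      simp only [hAx, hSx, mem_filter, mem_univ, true_and] at hi ⊢
      exact hi₀.trans_le (hi i₀)
    have c1 := card_le_card e1
    have c2 := card_le_card e2
    have c3 := card_le_card e3
    have c4 := card_le_card e4
    rw [card_image_of_injective _ π.injective] at c1
    rw [card_image_of_injective _ τ.injective] at c3
    have f2 : Ay = Sy := eq_of_subset_of_card_le e2 (by lia)
    have f4 : Ax = Sx := eq_of_subset_of_card_le e4 (by lia)
    have f1 : Sx = Sy.image π := by
      rw [← f2]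
      exact eq_of_subset_of_card_le e1 (by rw [card_image_of_injective _ π.injective]; lia)
    refine ⟨Sy, ⟨j₀, by simpa [hSy] using hj₀⟩, fun i hi j hij => ?_, ?_, ?_⟩
    · refine mem_of_sameCycle (fun k hk => ?_) hi hij
      have : τ k ∈ Sy.image π := by
        rw [← f1, ← f4]
        exact e3 (mem_image_of_mem _ hk)
      obtain ⟨l, hl, hl'⟩ := mem_image.1 this
      rw [Equiv.Perm.mul_apply, ← hl']
      simpa using hl
    · refine eq_unif hy (by simp [hSy]) fun i hi => ?_
      rw [← f2] at hi
      simpa [hAy] using hi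
    · rw [← f1]
      refine eq_unif hx (by simp [hSx]) fun i hi => ?_
      rw [← f4] at hi
      simpa [hAx] using hi
  · rintro ⟨J, hJ, hc, rfl, rfl⟩
    refine ⟨isMixed_unif (hJ.image _), isMixed_unif hJ, fun i hi => ?_, fun j hj => ?_⟩
    · obtain ⟨j, hj, rfl⟩ := mem_image.1 (mem_of_unif_pos hi)
      exact unif_le (by simpa using hj)
    · refine unif_le (mem_image.2 ⟨(π⁻¹ * τ) j, ?_, by simp⟩)
      exact hc j (mem_of_unif_pos hj) _ ⟨1, by simp⟩

/-! ### Complexity of uniform strategies -/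

lemma Cx_eq_card {n : ℕ} {x : Fin n → ℚ} {S : Finset (Fin n)} (hS : S.Nonempty)
    (hx : ratStrat x = unif S) : Cx x = S.card := by
  have hx' : ∀ i, x i = if i ∈ S then 1 / (S.card : ℚ) else 0 := fun i => by
    have := congrFun hx i
    simp only [ratStrat, unif] at this
    apply Rat.cast_injective (α := ℝ)
    rw [this]
    split_ifs <;> simp
  have hden : (1 / (S.card : ℚ)).den = S.card := by
    rw [one_div, Rat.inv_natCast_den_of_pos hS.card_pos]
  unfold Cx
  apply Nat.dvd_antisymm
  · refine Finset.lcm_dvd fun i _ => ?_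
    rw [hx']
    split_ifs
    · rw [hden]
    · simp
  · obtain ⟨i, hi⟩ := hS
    have := Finset.dvd_lcm (f := fun i => (x i).den) (mem_univ i)
    simp only [hx' i, if_pos hi, hden] at this
    exact this

lemma exists_ratStrat_eq_unif {n : ℕ} (S : Finset (Fin n)) :
    ∃ x : Fin n → ℚ, ratStrat x = unif S :=
  ⟨fun i => if i ∈ S then 1 / (S.card : ℚ) else 0, by
    funext i
    simp only [ratStrat, unif]
    split_ifs <;> simp⟩

/-- If `T` is a coinitial subset of `S`, the two infima agree; this includes the case where both
are empty. -/
lemma nat_sInf_eq {S T : Set ℕ} (hTS : T ⊆ S) (h : ∀ s ∈ S, ∃ t ∈ T, t ≤ s) :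
    sInf S = sInf T := by
  rcases S.eq_empty_or_nonempty with rfl | hS
  · rw [Set.subset_empty_iff.1 hTS]
  · obtain ⟨t, ht, hle⟩ := h _ (Nat.sInf_mem hS)
    exact le_antisymm (Nat.sInf_le (hTS (Nat.sInf_mem ⟨t, ht⟩))) ((Nat.sInf_le ht).trans hle)

/-- The least size of a nonempty union of orbits is the least size of an orbit. -/
lemma sInf_card_eq {n : ℕ} (f : Equiv.Perm (Fin n)) :
    sInf {q | ∃ J : Finset (Fin n), J.Nonempty ∧
      (∀ i ∈ J, ∀ j, f.SameCycle i j → j ∈ J) ∧ J.card = q} =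
    sInf {m | ∃ i : Fin n, m = {j | f.SameCycle i j}.ncard} := by
  classical
  apply nat_sInf_eq
  · rintro _ ⟨i, rfl⟩
    refine ⟨univ.filter (fun j => f.SameCycle i j), ⟨i, by simpa using .refl f i⟩, fun a ha b hab => ?_, ?_⟩
    · simp only [mem_filter, mem_univ, true_and] at ha ⊢
      exact ha.trans hab
    · rw [← Set.ncard_coe_finset]
      simp
  · rintro _ ⟨J, ⟨i, hi⟩, hc, rfl⟩
    refine ⟨_, ⟨i, rfl⟩, ?_⟩
    rw [← Set.ncard_coe_finset]
    exact Set.ncard_le_ncard (fun j hj => hc i hi j hj) J.finite_toSet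

/-- `(x,y)` is a NE of the permutation game `(P_π, P_τ)` iff `y = U_J` and
`x = U_{π(J)}` for some nonempty `J ⊆ [n]` that is a union of orbits of `π⁻¹∘τ`;
consequently `C₁ = C₂ = ` the minimum orbit size of `π⁻¹∘τ`. -/
theorem statement19 {n : ℕ} (π τ : Equiv.Perm (Fin n)) :
    (∀ x y : Fin n → ℝ,
      IsNash (Pmat π) (Pmat τ) x y ↔
        ∃ J : Finset (Fin n), J.Nonempty ∧
          (∀ i ∈ J, ∀ j, (π⁻¹ * τ).SameCycle i j → j ∈ J) ∧
          y = unif J ∧ x = unif (J.image π)) ∧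
    C1 (Pmat π) (Pmat τ) =
      sInf {m | ∃ i : Fin n, m = {j | (π⁻¹ * τ).SameCycle i j}.ncard} ∧
    C2 (Pmat π) (Pmat τ) =
      sInf {m | ∃ i : Fin n, m = {j | (π⁻¹ * τ).SameCycle i j}.ncard} := by
  refine ⟨isNash_iff_unif π τ, ?_, ?_⟩
  · rw [← sInf_card_eq, C1]
    congr 1
    ext q
    constructor
    · rintro ⟨x, y, h, rfl⟩
      obtain ⟨J, hJ, hc, -, hx⟩ := (isNash_iff_unif π τ _ _).1 h
      refine ⟨J, hJ, hc, ?_⟩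
      rw [Cx_eq_card (hJ.image _) hx, card_image_of_injective _ π.injective]
    · rintro ⟨J, hJ, hc, rfl⟩
      obtain ⟨y, hy⟩ := exists_ratStrat_eq_unif J
      obtain ⟨x, hx⟩ := exists_ratStrat_eq_unif (J.image π)
      refine ⟨x, y, (isNash_iff_unif π τ _ _).2 ⟨J, hJ, hc, hy, hx⟩, ?_⟩
      rw [Cx_eq_card (hJ.image _) hx, card_image_of_injective _ π.injective]
  · rw [← sInf_card_eq, C2]
    congr 1
    ext q
    constructor
    · rintro ⟨x, y, h, rfl⟩
      obtain ⟨J, hJ, hc, hy, -⟩ := (isNash_iff_unif π τ _ _).1 h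
      exact ⟨J, hJ, hc, (Cx_eq_card hJ hy).symm⟩
    · rintro ⟨J, hJ, hc, rfl⟩
      obtain ⟨y, hy⟩ := exists_ratStrat_eq_unif J
      obtain ⟨x, hx⟩ := exists_ratStrat_eq_unif (J.image π)
      exact ⟨x, y, (isNash_iff_unif π τ _ _).2 ⟨J, hJ, hc, hy, hx⟩, Cx_eq_card hJ hy⟩
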